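/- (Lemma 3.2, inequality (3.2)) Let (D, F) be a good pair, X ⊆ ℝⁿ convex compact, A affine with A(X) ⊆ M, g ∈ ℝⁿ, and define 2Φ_*(r) = sup_{x,y∈X} inf_{φ∈F, α>0} Φ_r(x, y; φ, α). Then for every δ ∈ (0, 1), the minimax optimal risk satisfies Risk_*(δ²/4) ≥ Φ_*(ln(1/δ)). -/

import Mathlib

open MeasureTheory Real Matrix Set
open scoped ENNReal

/-- A "good pair" `(𝒟, ℱ)` in the sense of Juditsky–Nemirovski:
a parametric family of positive probability densities `p μ`, `μ ∈ M`, on `(Ω, P)`,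
together with a finite-dimensional linear space `F` of Borel functions on `Ω`
containing the constants, such that log-likelihood ratios belong to `F` and
`μ ↦ ln ∫ e^{φ} p_μ dP` is well defined (finite, witnessed by integrability)
and concave on `M` for every `φ ∈ F`. -/
structure GoodPair (Ω : Type*) [MeasurableSpace Ω] (P : Measure Ω)
    (E : Type*) [NormedAddCommGroup E] [NormedSpace ℝ E] where
  M : Set E
  p : E → Ω → ℝ
  F : Submodule ℝ (Ω → ℝ)
  M_open : IsOpen M
  M_convex : Convex ℝ M
  p_meas : ∀ μ ∈ M, Measurable (p μ)
  p_pos : ∀ μ ∈ M, ∀ ω, 0 < p μ ω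
  p_prob : ∀ μ ∈ M, ∫ ω, p μ ω ∂P = 1
  F_fd : FiniteDimensional ℝ F
  F_meas : ∀ φ ∈ F, Measurable φ
  F_const : ∀ c : ℝ, (fun _ : Ω => c) ∈ F
  logratio_mem : ∀ μ ∈ M, ∀ ν ∈ M, (fun ω => Real.log (p μ ω / p ν ω)) ∈ F
  F_finite : ∀ φ ∈ F, ∀ μ ∈ M, Integrable (fun ω => Real.exp (φ ω) * p μ ω) P
  F_concave : ∀ φ ∈ F,
    ConcaveOn ℝ M (fun μ => Real.log (∫ ω, Real.exp (φ ω) * p μ ω ∂P))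

variable {Ω : Type*} [MeasurableSpace Ω] {P : Measure Ω}
  {E : Type*} [NormedAddCommGroup E] [NormedSpace ℝ E] {n : ℕ}

/-- The distribution of the observation when the parameter is `μ`:
the measure with density `p μ` with respect to `P`. -/
noncomputable def obsMeasure (D : GoodPair Ω P E) (μ : E) : Measure Ω :=
  P.withDensity fun ω => ENNReal.ofReal (D.p μ ω)

/-- The `ε`-risk of an estimate `ghat` of the linear form `gᵀx`, `x ∈ X`:
`inf {δ | sup_{x ∈ X} Prob_{ω ∼ p_{A(x)}·P} {|ghat ω - gᵀx| > δ} < ε}`. -/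
noncomputable def Risk (D : GoodPair Ω P E) (A : (Fin n → ℝ) →ᵃ[ℝ] E)
    (g : Fin n → ℝ) (X : Set (Fin n → ℝ)) (ghat : Ω → ℝ) (ε : ℝ) : ℝ :=
  sInf {δ : ℝ |
    (⨆ x ∈ X, obsMeasure D (A x) {ω | δ < |ghat ω - g ⬝ᵥ x|}) < ENNReal.ofReal ε}

/-- The minimax optimal `ε`-risk over all (Borel) estimates. -/
noncomputable def RiskStar (D : GoodPair Ω P E) (A : (Fin n → ℝ) →ᵃ[ℝ] E)
    (g : Fin n → ℝ) (X : Set (Fin n → ℝ)) (ε : ℝ) : ℝ :=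
  sInf {ρ : ℝ | ∃ ghat : Ω → ℝ, Measurable ghat ∧ ρ = Risk D A g X ghat ε}

/-- The minimax optimal `ε`-risk over affine estimates, i.e. estimates `φ ∈ F`. -/
noncomputable def RiskAff (D : GoodPair Ω P E) (A : (Fin n → ℝ) →ᵃ[ℝ] E)
    (g : Fin n → ℝ) (X : Set (Fin n → ℝ)) (ε : ℝ) : ℝ :=
  sInf {ρ : ℝ | ∃ φ ∈ D.F, ρ = Risk D A g X φ ε}

/-- The function `Φ_r(x, y; φ, α)`. -/
noncomputable def PhiFun (D : GoodPair Ω P E) (A : (Fin n → ℝ) →ᵃ[ℝ] E)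
    (g : Fin n → ℝ) (r : ℝ) (x y : Fin n → ℝ) (φ : Ω → ℝ) (α : ℝ) : ℝ :=
  g ⬝ᵥ x - g ⬝ᵥ y
    + α * Real.log (∫ ω, Real.exp (φ ω / α) * D.p (A y) ω ∂P)
    + α * Real.log (∫ ω, Real.exp (-φ ω / α) * D.p (A x) ω ∂P)
    + 2 * α * r

/-- `Φ_*(r)` defined through the sup-inf value:
`2Φ_*(r) = sup_{x,y ∈ X} inf_{φ ∈ F, α > 0} Φ_r(x, y; φ, α)`. -/
noncomputable def PhiStarSI (D : GoodPair Ω P E) (A : (Fin n → ℝ) →ᵃ[ℝ] E)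
    (g : Fin n → ℝ) (X : Set (Fin n → ℝ)) (r : ℝ) : ℝ :=
  (1/2) * sSup {v : ℝ | ∃ x ∈ X, ∃ y ∈ X,
    v = sInf {w : ℝ | ∃ φ ∈ D.F, ∃ α : ℝ, 0 < α ∧ w = PhiFun D A g r x y φ α}}

/-- `Φ_*(r)` defined through the inf-sup value:
`2Φ_*(r) = inf_{φ ∈ F, α > 0} sup_{x,y ∈ X} Φ_r(x, y; φ, α)`. -/
noncomputable def PhiStarIS (D : GoodPair Ω P E) (A : (Fin n → ℝ) →ᵃ[ℝ] E)
    (g : Fin n → ℝ) (X : Set (Fin n → ℝ)) (r : ℝ) : ℝ :=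
  (1/2) * sInf {v : ℝ | ∃ φ ∈ D.F, ∃ α : ℝ, 0 < α ∧
    v = sSup {w : ℝ | ∃ x ∈ X, ∃ y ∈ X, w = PhiFun D A g r x y φ α}}

/-- Cauchy–Schwarz for the geometric mean of two nonnegative integrable functions. -/
theorem integral_sqrt_mul_le {f h : Ω → ℝ} (hf : Integrable f P) (hh : Integrable h P)
    (hf0 : ∀ ω, 0 ≤ f ω) (hh0 : ∀ ω, 0 ≤ h ω) :
    ∫ ω, √(f ω * h ω) ∂P ≤ √(∫ ω, f ω ∂P) * √(∫ ω, h ω ∂P) := by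
  have memLp_sqrt {u : Ω → ℝ} (hu : Integrable u P) (hu0 : ∀ ω, 0 ≤ u ω) :
      MemLp (fun ω => √(u ω)) (ENNReal.ofReal 2) P := by
    rw [ENNReal.ofReal_ofNat,
      memLp_two_iff_integrable_sq (continuous_sqrt.comp_aestronglyMeasurable hu.1)]
    simpa only [sq_sqrt (hu0 _)] using hu
  have key := integral_mul_le_Lp_mul_Lq_of_nonneg Real.HolderConjugate.two_two
    (ae_of_all P fun ω => sqrt_nonneg (f ω)) (ae_of_all P fun ω => sqrt_nonneg (h ω))
    (memLp_sqrt hf hf0) (memLp_sqrt hh hh0)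
  simpa only [rpow_two, sq_sqrt (hf0 _), sq_sqrt (hh0 _), ← sqrt_eq_rpow, ← sqrt_mul (hf0 _)]
    using key

namespace GoodPair

variable (D : GoodPair Ω P E) {μ ν : E}

/-- The Hellinger affinity `∫ √(p_μ p_ν) dP`. -/
noncomputable def affinity (μ ν : E) : ℝ := ∫ ω, √(D.p μ ω * D.p ν ω) ∂P

theorem affinity_comm (μ ν : E) : D.affinity μ ν = D.affinity ν μ := by
  simp only [affinity, mul_comm]

theorem integrable_p (hμ : μ ∈ D.M) : Integrable (D.p μ) P :=
  Integrable.of_integral_ne_zero (by rw [D.p_prob μ hμ]; exact one_ne_zero)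

theorem integral_exp_mul_pos {φ : Ω → ℝ} (hφ : φ ∈ D.F) (hμ : μ ∈ D.M) :
    0 < ∫ ω, exp (φ ω) * D.p μ ω ∂P := by
  have pos (ω : Ω) : 0 < exp (φ ω) * D.p μ ω := mul_pos (exp_pos _) (D.p_pos μ hμ ω)
  rw [integral_pos_iff_support_of_nonneg (fun ω => (pos ω).le) (D.F_finite φ hφ μ hμ),
    Function.support_eq_univ fun ω => (pos ω).ne', pos_iff_ne_zero, Measure.measure_univ_ne_zero]
  rintro rfl
  simpa using D.p_prob μ hμ

theorem half_log_mem (hμ : μ ∈ D.M) (hν : ν ∈ D.M) :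
    (fun ω => log (D.p ν ω / D.p μ ω) / 2) ∈ D.F := by
  convert D.F.smul_mem (1 / 2) (D.logratio_mem ν hν μ hμ) using 1
  ext ω
  simp only [Pi.smul_apply, smul_eq_mul]
  ring

theorem exp_half_log_mul (hμ : μ ∈ D.M) (hν : ν ∈ D.M) (ω : Ω) :
    exp (log (D.p ν ω / D.p μ ω) / 2) * D.p μ ω = √(D.p μ ω * D.p ν ω) := by
  have hp := D.p_pos μ hμ ω
  have hq := D.p_pos ν hν ω
  rw [← log_sqrt (div_pos hq hp).le, exp_log (sqrt_pos.2 (div_pos hq hp)), eq_comm,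
    sqrt_eq_iff_mul_self_eq_of_pos (mul_pos (sqrt_pos.2 (div_pos hq hp)) hp),
    mul_mul_mul_comm, mul_self_sqrt (div_pos hq hp).le]
  field_simp

theorem integral_exp_half_log (hμ : μ ∈ D.M) (hν : ν ∈ D.M) :
    ∫ ω, exp (log (D.p ν ω / D.p μ ω) / 2) * D.p μ ω ∂P = D.affinity μ ν := by
  simp only [affinity, D.exp_half_log_mul hμ hν]

theorem integral_exp_neg_half_log (hμ : μ ∈ D.M) (hν : ν ∈ D.M) :
    ∫ ω, exp (-(log (D.p ν ω / D.p μ ω) / 2)) * D.p ν ω ∂P = D.affinity μ ν := by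
  rw [affinity_comm, ← D.integral_exp_half_log hν hμ]
  simp only [← neg_div, ← log_inv, inv_div]

theorem integrable_sqrt_mul (hμ : μ ∈ D.M) (hν : ν ∈ D.M) :
    Integrable (fun ω => √(D.p μ ω * D.p ν ω)) P := by
  simpa only [D.exp_half_log_mul hμ hν] using D.F_finite _ (D.half_log_mem hμ hν) μ hμ

theorem affinity_pos (hμ : μ ∈ D.M) (hν : ν ∈ D.M) : 0 < D.affinity μ ν := by
  rw [← D.integral_exp_half_log hμ hν]
  exact D.integral_exp_mul_pos (D.half_log_mem hμ hν) hμ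

theorem affinity_self (hμ : μ ∈ D.M) : D.affinity μ μ = 1 := by
  simp only [affinity, sqrt_mul_self (D.p_pos μ hμ _).le, D.p_prob μ hμ]

theorem two_mul_log_affinity_le {φ : Ω → ℝ} (hφ : φ ∈ D.F) (hμ : μ ∈ D.M) (hν : ν ∈ D.M) :
    2 * log (D.affinity μ ν) ≤
      log (∫ ω, exp (φ ω) * D.p μ ω ∂P) + log (∫ ω, exp (-φ ω) * D.p ν ω ∂P) := by
  have hφ' : (fun ω => -φ ω) ∈ D.F := D.F.neg_mem hφ
  have hI := D.integral_exp_mul_pos hφ hμ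
  have hJ := D.integral_exp_mul_pos hφ' hν
  have key := integral_sqrt_mul_le (D.F_finite φ hφ μ hμ) (D.F_finite _ hφ' ν hν)
    (fun ω => (mul_pos (exp_pos _) (D.p_pos μ hμ ω)).le)
    (fun ω => (mul_pos (exp_pos _) (D.p_pos ν hν ω)).le)
  simp only [mul_mul_mul_comm (exp _) _ (exp _), ← exp_add, add_neg_cancel, exp_zero,
    one_mul] at key
  have hlog := log_le_log (D.affinity_pos hμ hν) key
  rw [log_mul (sqrt_pos.2 hI).ne' (sqrt_pos.2 hJ).ne', log_sqrt hI.le, log_sqrt hJ.le] at hlog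
  linarith

theorem concaveOn_log_affinity (hν : ν ∈ D.M) :
    ConcaveOn ℝ D.M fun μ => log (D.affinity μ ν) := by
  refine ⟨D.M_convex, fun μ₁ h₁ μ₂ h₂ a b ha hb hab => ?_⟩
  have hμ := D.M_convex h₁ h₂ ha hb hab
  have hφ := D.half_log_mem hμ hν
  have hconc := (D.F_concave _ hφ).2 h₁ h₂ ha hb hab
  have le₁ := mul_le_mul_of_nonneg_left (D.two_mul_log_affinity_le hφ h₁ hν) ha
  have le₂ := mul_le_mul_of_nonneg_left (D.two_mul_log_affinity_le hφ h₂ hν) hb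
  rw [D.integral_exp_neg_half_log hμ hν] at le₁ le₂
  simp only [D.integral_exp_half_log hμ hν, smul_eq_mul] at hconc ⊢
  have hb' : b = 1 - a := by linarith
  subst hb'
  linarith

theorem continuousOn_affinity [FiniteDimensional ℝ E] (hν : ν ∈ D.M) :
    ContinuousOn (fun μ => D.affinity μ ν) D.M :=
  ((D.concaveOn_log_affinity hν).continuousOn D.M_open).rexp.congr fun _ hμ =>
    (exp_log (D.affinity_pos hμ hν)).symm

theorem isProbabilityMeasure_obsMeasure (hμ : μ ∈ D.M) :
    IsProbabilityMeasure (obsMeasure D μ) := by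
  refine ⟨?_⟩
  rw [obsMeasure, withDensity_apply _ MeasurableSet.univ, Measure.restrict_univ,
    ← ofReal_integral_eq_lintegral_ofReal (D.integrable_p hμ)
    (ae_of_all _ fun ω => (D.p_pos μ hμ ω).le), D.p_prob μ hμ, ENNReal.ofReal_one]

theorem obsMeasure_real (hμ : μ ∈ D.M) {B : Set Ω} (hB : MeasurableSet B) :
    (obsMeasure D μ).real B = ∫ ω in B, D.p μ ω ∂P := by
  rw [measureReal_def, obsMeasure, withDensity_apply _ hB,
    integral_eq_lintegral_of_nonneg_ae (ae_of_all _ fun ω => (D.p_pos μ hμ ω).le)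
      (D.integrable_p hμ).1.restrict]

theorem affinity_le_sqrt_add_sqrt (hμ : μ ∈ D.M) (hν : ν ∈ D.M) {B : Set Ω}
    (hB : MeasurableSet B) :
    D.affinity μ ν ≤ √((obsMeasure D μ).real B) + √((obsMeasure D ν).real Bᶜ) := by
  have := D.isProbabilityMeasure_obsMeasure hμ
  have := D.isProbabilityMeasure_obsMeasure hν
  have setIntegral_le {C : Set Ω} (hC : MeasurableSet C) :
      ∫ ω in C, √(D.p μ ω * D.p ν ω) ∂P ≤
        √((obsMeasure D μ).real C) * √((obsMeasure D ν).real C) := by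
    rw [D.obsMeasure_real hμ hC, D.obsMeasure_real hν hC]
    exact integral_sqrt_mul_le (D.integrable_p hμ).restrict (D.integrable_p hν).restrict
      (fun ω => (D.p_pos μ hμ ω).le) (fun ω => (D.p_pos ν hν ω).le)
  rw [affinity, ← integral_add_compl hB (D.integrable_sqrt_mul hμ hν)]
  refine add_le_add ((setIntegral_le hB).trans ?_) ((setIntegral_le hB.compl).trans ?_)
  · exact mul_le_of_le_one_right (sqrt_nonneg _) (sqrt_le_one.2 measureReal_le_one)
  · exact mul_le_of_le_one_left (sqrt_nonneg _) (sqrt_le_one.2 measureReal_le_one)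

/-- Uniform tightness of the laws of an estimate near a given parameter. -/
theorem eventually_obsMeasure_real_le [FiniteDimensional ℝ E] (hν : ν ∈ D.M) {f : Ω → ℝ}
    (hf : Measurable f) {ε : ℝ} (hε : 0 < ε) :
    ∃ t : ℝ, ∀ᶠ μ in nhds ν, (obsMeasure D μ).real {ω | t < |f ω|} ≤ ε := by
  have := D.isProbabilityMeasure_obsMeasure hν
  have hmeas (t : ℝ) : MeasurableSet {ω | t < |f ω|} := measurableSet_lt measurable_const hf.abs
  have hs : √(1 - ε) < 1 := (sqrt_lt' one_pos).2 (by linarith)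
  have htail : Filter.Tendsto (fun t : ℝ => √((obsMeasure D ν).real {ω | t < |f ω|}))
      Filter.atTop (nhds 0) := by
    have hanti : Antitone fun t : ℝ => {ω | t < |f ω|} := fun s t hst ω hω => hst.trans_lt hω
    have hempty : ⋂ t : ℝ, {ω | t < |f ω|} = ∅ :=
      eq_empty_of_forall_notMem fun ω hω => lt_irrefl |f ω| (mem_iInter.1 hω |f ω|)
    have h := tendsto_measure_iInter_atTop (μ := obsMeasure D ν)
      (fun t => (hmeas t).nullMeasurableSet) hanti ⟨0, measure_ne_top _ _⟩
    rw [hempty, measure_empty] at h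
    have h' := ((ENNReal.tendsto_toReal ENNReal.zero_ne_top).comp h).sqrt
    simpa [measureReal_def] using h'
  obtain ⟨t, ht⟩ := (htail.eventually_lt_const
    (show 0 < (1 - √(1 - ε)) / 2 by linarith)).exists
  have hcont := (D.continuousOn_affinity hν).continuousAt (D.M_open.mem_nhds hν)
  have hnear := hcont.eventually_const_lt (u := (1 + √(1 - ε)) / 2)
    (by simp only [D.affinity_self hν]; linarith)
  refine ⟨t, ?_⟩
  filter_upwards [hnear, D.M_open.mem_nhds hν] with μ hμν hμ
  by_contra! hlt
  have := D.isProbabilityMeasure_obsMeasure hμ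
  have hle := D.affinity_le_sqrt_add_sqrt hμ hν (hmeas t).compl
  rw [compl_compl, probReal_compl_eq_one_sub (hmeas t)] at hle
  have hmono : √(1 - (obsMeasure D μ).real {ω | t < |f ω|}) ≤ √(1 - ε) :=
    sqrt_le_sqrt (by linarith)
  linarith

variable {D} {A : (Fin n → ℝ) →ᵃ[ℝ] E} {g : Fin n → ℝ} {X : Set (Fin n → ℝ)}

/-- Every Borel estimate has finite risk: the set defining `Risk` is nonempty. -/
theorem exists_iSup_obsMeasure_lt [FiniteDimensional ℝ E] (hX : IsCompact X)
    (hA : ∀ x ∈ X, A x ∈ D.M) (g : Fin n → ℝ) {f : Ω → ℝ} (hf : Measurable f) {ε : ℝ}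
    (hε : 0 < ε) :
    ∃ t : ℝ, (⨆ x ∈ X, obsMeasure D (A x) {ω | t < |f ω - g ⬝ᵥ x|}) < ENNReal.ofReal ε := by
  have hunif : ∃ t : ℝ, ∀ x ∈ X, (obsMeasure D (A x)).real {ω | t < |f ω|} ≤ ε / 2 := by
    have mono {s t : ℝ} (hst : s ≤ t) {x : Fin n → ℝ} (hx : x ∈ X)
        (h : (obsMeasure D (A x)).real {ω | s < |f ω|} ≤ ε / 2) :
        (obsMeasure D (A x)).real {ω | t < |f ω|} ≤ ε / 2 := by
      have := D.isProbabilityMeasure_obsMeasure (hA x hx)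
      exact (measureReal_mono fun ω hω => hst.trans_lt hω).trans h
    have hloc := hX.induction_on
      (p := fun S => ∃ t : ℝ, ∀ x ∈ S, x ∈ X →
        (obsMeasure D (A x)).real {ω | t < |f ω|} ≤ ε / 2)
      ⟨0, fun x hx => hx.elim⟩
      (fun S T hST ⟨t, ht⟩ => ⟨t, fun x hx => ht x (hST hx)⟩)
      (fun S T ⟨s, hs⟩ ⟨t, ht⟩ => ⟨max s t, fun x hx hxX => hx.elim
        (fun h => mono (le_max_left s t) hxX (hs x h hxX))
        (fun h => mono (le_max_right s t) hxX (ht x h hxX))⟩)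
      (fun x hx => by
        obtain ⟨t, ht⟩ := D.eventually_obsMeasure_real_le (hA x hx) hf (half_pos hε)
        have hcont := A.continuous_of_finiteDimensional.continuousAt (x := x)
        exact ⟨_, mem_nhdsWithin_of_mem_nhds (hcont.eventually ht), t, fun y hy _ => hy⟩)
    exact hloc.imp fun t ht x hx => ht x hx hx
  obtain ⟨t, ht⟩ := hunif
  have hg : Continuous fun x : Fin n → ℝ => g ⬝ᵥ x := by
    unfold dotProduct
    fun_prop
  obtain ⟨C, hC⟩ := hX.exists_bound_of_continuousOn hg.continuousOn
  refine ⟨t + C, lt_of_le_of_lt (iSup₂_le fun x hx => ?_)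
    ((ENNReal.ofReal_lt_ofReal_iff hε).2 (half_lt_self hε))⟩
  have := D.isProbabilityMeasure_obsMeasure (hA x hx)
  rw [← ENNReal.toReal_le_toReal (measure_ne_top _ _) ENNReal.ofReal_ne_top,
    ENNReal.toReal_ofReal (half_pos hε).le]
  refine (measureReal_mono fun ω (hω : t + C < |f ω - g ⬝ᵥ x|) => ?_).trans (ht x hx)
  have h₁ := hC x hx
  have h₂ := abs_sub (f ω) (g ⬝ᵥ x)
  rw [norm_eq_abs] at h₁
  simp only [mem_ofPred_eq]
  linarith

theorem real_lt_of_iSup_lt (hA : ∀ x ∈ X, A x ∈ D.M) {f : Ω → ℝ} {ε t : ℝ}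
    (ht : (⨆ x ∈ X, obsMeasure D (A x) {ω | t < |f ω - g ⬝ᵥ x|}) < ENNReal.ofReal ε)
    {x : Fin n → ℝ} (hx : x ∈ X) :
    (obsMeasure D (A x)).real {ω | t < |f ω - g ⬝ᵥ x|} < ε := by
  have := D.isProbabilityMeasure_obsMeasure (hA x hx)
  have h := (le_iSup₂ (f := fun x _ => obsMeasure D (A x) {ω | t < |f ω - g ⬝ᵥ x|}) x hx).trans_lt
    ht
  rw [measureReal_def]
  exact (ENNReal.lt_ofReal_iff_toReal_lt (measure_ne_top _ _)).1 h

theorem nonneg_of_iSup_lt (hA : ∀ x ∈ X, A x ∈ D.M) {f : Ω → ℝ} {ε t : ℝ}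
    (hε₁ : ε ≤ 1)
    (ht : (⨆ x ∈ X, obsMeasure D (A x) {ω | t < |f ω - g ⬝ᵥ x|}) < ENNReal.ofReal ε)
    {x : Fin n → ℝ} (hx : x ∈ X) : 0 ≤ t := by
  by_contra! hneg
  have := D.isProbabilityMeasure_obsMeasure (hA x hx)
  have h := real_lt_of_iSup_lt hA ht hx
  rw [show {ω | t < |f ω - g ⬝ᵥ x|} = univ from
    eq_univ_of_forall fun ω => hneg.trans_le (abs_nonneg _), probReal_univ] at h
  linarith

/-- The two-point lower bound: parameters whose affinity is at least `δ` cannot be separated. -/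
theorem sub_le_two_mul_of_le_affinity (hA : ∀ x ∈ X, A x ∈ D.M) {f : Ω → ℝ} (hf : Measurable f)
    {δ t : ℝ} (hδ : 0 < δ)
    (ht : (⨆ x ∈ X, obsMeasure D (A x) {ω | t < |f ω - g ⬝ᵥ x|}) < ENNReal.ofReal (δ ^ 2 / 4))
    {x y : Fin n → ℝ} (hx : x ∈ X) (hy : y ∈ X) (hxy : δ ≤ D.affinity (A x) (A y)) :
    g ⬝ᵥ x - g ⬝ᵥ y ≤ 2 * t := by
  by_contra! hsep
  have hB : MeasurableSet {ω | t < |f ω - g ⬝ᵥ x|} :=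
    measurableSet_lt measurable_const (hf.sub_const _).abs
  have := D.isProbabilityMeasure_obsMeasure (hA y hy)
  have hsub : {ω | t < |f ω - g ⬝ᵥ x|}ᶜ ⊆ {ω | t < |f ω - g ⬝ᵥ y|} := by
    intro ω hω
    simp only [mem_compl_iff, mem_ofPred_eq, not_lt] at hω ⊢
    have h₁ := (abs_le.1 hω).1
    have h₂ := le_abs_self (f ω - g ⬝ᵥ y)
    linarith
  have hPx := real_lt_of_iSup_lt hA ht hx
  have hPy := (measureReal_mono hsub).trans_lt (real_lt_of_iSup_lt hA ht hy)
  have half_bound {u : ℝ} (hu : u < δ ^ 2 / 4) : √u < δ / 2 :=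
    (sqrt_lt' (half_pos hδ)).2 (by linarith [show (δ / 2) ^ 2 = δ ^ 2 / 4 by ring])
  linarith [half_bound hPx, half_bound hPy,
    D.affinity_le_sqrt_add_sqrt (hA x hx) (hA y hy) hB]

theorem le_RiskStar [FiniteDimensional ℝ E] (hX : IsCompact X) (hA : ∀ x ∈ X, A x ∈ D.M)
    {ε c : ℝ} (hε : 0 < ε)
    (hc : ∀ (f : Ω → ℝ) (t : ℝ), Measurable f →
      (⨆ x ∈ X, obsMeasure D (A x) {ω | t < |f ω - g ⬝ᵥ x|}) < ENNReal.ofReal ε → c ≤ t) :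
    c ≤ RiskStar D A g X ε := by
  refine le_csInf ⟨_, 0, measurable_const, rfl⟩ ?_
  rintro _ ⟨f, hf, rfl⟩
  exact le_csInf (exists_iSup_obsMeasure_lt hX hA g hf hε) fun t ht => hc f t hf ht

theorem le_PhiFun (g : Fin n → ℝ) (r : ℝ) {x y : Fin n → ℝ} (hx : A x ∈ D.M) (hy : A y ∈ D.M)
    {φ : Ω → ℝ} (hφ : φ ∈ D.F) {α : ℝ} (hα : 0 < α) :
    g ⬝ᵥ x - g ⬝ᵥ y + 2 * α * (log (D.affinity (A x) (A y)) + r) ≤ PhiFun D A g r x y φ α := by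
  have hφα : (fun ω => φ ω / α) ∈ D.F := by
    convert D.F.smul_mem α⁻¹ hφ using 1
    ext ω
    simp [div_eq_inv_mul]
  have h := mul_le_mul_of_nonneg_left (D.two_mul_log_affinity_le hφα hy hx) hα.le
  rw [affinity_comm] at h
  simp only [PhiFun, neg_div]
  linarith

theorem exists_PhiFun_eq (g : Fin n → ℝ) (r : ℝ) {x y : Fin n → ℝ} (hx : A x ∈ D.M)
    (hy : A y ∈ D.M) {α : ℝ} (hα : 0 < α) :
    ∃ φ ∈ D.F, PhiFun D A g r x y φ α =
      g ⬝ᵥ x - g ⬝ᵥ y + 2 * α * (log (D.affinity (A x) (A y)) + r) := by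
  refine ⟨_, D.F.smul_mem α (D.half_log_mem hy hx), ?_⟩
  simp only [PhiFun, Pi.smul_apply, smul_eq_mul, neg_div, mul_div_cancel_left₀ _ hα.ne',
    D.integral_exp_half_log hy hx, D.integral_exp_neg_half_log hy hx,
    D.affinity_comm (A y) (A x)]
  ring

/-- If the affinity is below the threshold `e^{-r}`, the infimum of `Φ_r` is `-∞`, which `sInf`
reports as `0`. -/
theorem sInf_PhiFun_eq_zero (g : Fin n → ℝ) {r : ℝ} {x y : Fin n → ℝ} (hx : A x ∈ D.M)
    (hy : A y ∈ D.M) (hr : log (D.affinity (A x) (A y)) + r < 0) :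
    sInf {w : ℝ | ∃ φ ∈ D.F, ∃ α : ℝ, 0 < α ∧ w = PhiFun D A g r x y φ α} = 0 := by
  refine Real.sInf_of_not_bddBelow ?_
  rintro ⟨b, hb⟩
  set k := log (D.affinity (A x) (A y)) + r
  set c := g ⬝ᵥ x - g ⬝ᵥ y
  have hα : 0 < (|c - b| + 1) / (-k) := div_pos (by positivity) (by linarith)
  obtain ⟨φ, hφ, hφe⟩ := exists_PhiFun_eq g r hx hy hα
  have h := hb ⟨φ, hφ, _, hα, rfl⟩
  have hmul : (|c - b| + 1) / (-k) * k = -(|c - b| + 1) := by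
    field_simp [hr.ne]
  rw [hφe, mul_assoc, hmul] at h
  linarith [le_abs_self (c - b), abs_nonneg (c - b)]

theorem sInf_PhiFun_le (g : Fin n → ℝ) {r : ℝ} {x y : Fin n → ℝ} (hx : A x ∈ D.M)
    (hy : A y ∈ D.M) (hr : 0 ≤ log (D.affinity (A x) (A y)) + r) :
    sInf {w : ℝ | ∃ φ ∈ D.F, ∃ α : ℝ, 0 < α ∧ w = PhiFun D A g r x y φ α} ≤
      g ⬝ᵥ x - g ⬝ᵥ y := by
  have hbdd : BddBelow {w : ℝ | ∃ φ ∈ D.F, ∃ α : ℝ, 0 < α ∧ w = PhiFun D A g r x y φ α} := by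
    refine ⟨g ⬝ᵥ x - g ⬝ᵥ y, ?_⟩
    rintro _ ⟨φ, hφ, α, hα, rfl⟩
    have h := le_PhiFun g r hx hy hφ hα
    linarith [mul_nonneg (mul_nonneg zero_le_two hα.le) hr]
  set k := log (D.affinity (A x) (A y)) + r
  refine le_of_forall_pos_le_add fun η hη => ?_
  have hα : 0 < η / (2 * (k + 1)) := by positivity
  obtain ⟨φ, hφ, hφe⟩ := exists_PhiFun_eq g r hx hy hα
  refine (csInf_le hbdd ⟨φ, hφ, _, hα, rfl⟩).trans ?_
  rw [hφe]
  gcongr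
  change 2 * (η / (2 * (k + 1))) * k ≤ η
  have : 2 * (η / (2 * (k + 1))) * k = η * (k / (k + 1)) := by
    field_simp
  rw [this]
  exact mul_le_of_le_one_right hη.le ((div_le_one (by linarith)).2 (by linarith))

end GoodPair

/-- **Lemma 3.2, inequality (3.2).** For every `δ ∈ (0,1)`, the minimax optimal
risk satisfies `Risk_*(δ²/4) ≥ Φ_*(ln(1/δ))`, where
`2Φ_*(r) = sup_{x,y∈X} inf_{φ∈F, α>0} Φ_r(x,y;φ,α)`. -/
theorem riskStar_ge_phiStar
    {Ω : Type*} [MeasurableSpace Ω] [TopologicalSpace Ω] [PolishSpace Ω] [BorelSpace Ω]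
    {P : Measure Ω} [SigmaFinite P] {m n : ℕ}
    (D : GoodPair Ω P (Fin m → ℝ))
    (X : Set (Fin n → ℝ)) (hXne : X.Nonempty) (hXcp : IsCompact X) (hXcv : Convex ℝ X)
    (A : (Fin n → ℝ) →ᵃ[ℝ] (Fin m → ℝ)) (hA : ∀ x ∈ X, A x ∈ D.M)
    (g : Fin n → ℝ) (δ : ℝ) (hδ : δ ∈ Set.Ioo (0 : ℝ) 1) :
    PhiStarSI D A g X (Real.log (1 / δ)) ≤ RiskStar D A g X (δ ^ 2 / 4) := by
  obtain ⟨hδ₀, hδ₁⟩ := hδ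
  have hε : 0 < δ ^ 2 / 4 := by positivity
  obtain ⟨x₀, hx₀⟩ := hXne
  suffices h : sSup {v : ℝ | ∃ x ∈ X, ∃ y ∈ X, v = sInf {w : ℝ | ∃ φ ∈ D.F, ∃ α : ℝ,
      0 < α ∧ w = PhiFun D A g (Real.log (1 / δ)) x y φ α}} ≤ 2 * RiskStar D A g X (δ ^ 2 / 4) by
    rw [PhiStarSI]
    linarith
  refine csSup_le ⟨_, x₀, hx₀, x₀, hx₀, rfl⟩ ?_
  rintro _ ⟨x, hx, y, hy, rfl⟩
  rcases lt_or_ge (log (D.affinity (A x) (A y)) + log (1 / δ)) 0 with hr | hr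
  · rw [GoodPair.sInf_PhiFun_eq_zero g (hA x hx) (hA y hy) hr]
    have h := GoodPair.le_RiskStar (g := g) hXcp hA hε fun f t _ ht =>
      GoodPair.nonneg_of_iSup_lt hA (by nlinarith) ht hx₀
    linarith
  · refine (GoodPair.sInf_PhiFun_le g (hA x hx) (hA y hy) hr).trans ?_
    have hxy : δ ≤ D.affinity (A x) (A y) := by
      rw [one_div, log_inv] at hr
      exact (log_le_log_iff hδ₀ (D.affinity_pos (hA x hx) (hA y hy))).1 (by linarith)
    have h := GoodPair.le_RiskStar (g := g) (c := (g ⬝ᵥ x - g ⬝ᵥ y) / 2) hXcp hA hε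
      fun f t hf ht => by
        linarith [GoodPair.sub_le_two_mul_of_le_affinity hA hf hδ₀ ht hx hy hxy]
    linarith
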